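/- arXiv:0810.1114 — 7 statements merged into one kernel-verified Lean document; each statement's English description precedes it below -/
import Mathlib

section
/- Let K be a field, V a finite-dimensional K-vector space, m ≥ 2 an integer, w a preregular m-linear form on V with associated automorphism Q_w, and L a linear automorphism of V. Then w∘L is preregular and Q_{w∘L} = L⁻¹ Q_w L. -/
/-- An `m`-linear form `w` (here `m = k + 1`) is `Q`-cyclic if
`w(X₁,…,X_m) = w(Q X_m, X₁, …, X_{m−1})` for all `X₁,…,X_m`. -/
def QCyclic {K V : Type*} [Field K] [AddCommGroup V] [Module K V] {k : ℕ}
    (Q : V ≃ₗ[K] V) (w : MultilinearMap K (fun _ : Fin (k + 1) => V) K) : Prop :=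
  ∀ (x : V) (Y : Fin k → V), w (Fin.snoc Y x) = w (Fin.cons (Q x) Y)

/-- Condition (i): `w(X, X₁, …, X_{m−1}) = 0` for all `X₁,…,X_{m−1}` implies `X = 0`. -/
def Nondeg1 {K V : Type*} [Field K] [AddCommGroup V] [Module K V] {k : ℕ}
    (w : MultilinearMap K (fun _ : Fin (k + 1) => V) K) : Prop :=
  ∀ x : V, (∀ Y : Fin k → V, w (Fin.cons x Y) = 0) → x = 0

section CompLinearMap

variable {R M M' N : Type*} [Semiring R] [AddCommMonoid M] [AddCommMonoid M']
  [AddCommMonoid N] [Module R M] [Module R M'] [Module R N] {k : ℕ}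

theorem compLinearMap_const_cons (f : MultilinearMap R (fun _ : Fin (k + 1) => M) N)
    (g : M' →ₗ[R] M) (x : M') (y : Fin k → M') :
    f.compLinearMap (fun _ => g) (Fin.cons x y) = f (Fin.cons (g x) (g ∘ y)) :=
  congrArg f (Fin.comp_cons g x y)

theorem compLinearMap_const_snoc (f : MultilinearMap R (fun _ : Fin (k + 1) => M) N)
    (g : M' →ₗ[R] M) (y : Fin k → M') (x : M') :
    f.compLinearMap (fun _ => g) (Fin.snoc y x) = f (Fin.snoc (g ∘ y) (g x)) :=
  congrArg f (Fin.comp_snoc g y x)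

end CompLinearMap

section Preregular

variable {K V W : Type*} [Field K] [AddCommGroup V] [Module K V] [AddCommGroup W] [Module K W]
  {k : ℕ} {w : MultilinearMap K (fun _ : Fin (k + 1) => V) K}

theorem Nondeg1.compLinearMap_of_bijective (hw : Nondeg1 w) {L : W →ₗ[K] V}
    (hL : Function.Bijective L) : Nondeg1 (w.compLinearMap fun _ => L) := by
  intro x hx
  suffices L x = 0 from (map_eq_zero_iff L hL.injective).mp this
  refine hw (L x) fun Y => ?_
  obtain ⟨Z, rfl⟩ := hL.surjective.comp_left Y
  rw [← compLinearMap_const_cons, hx]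

theorem QCyclic.compLinearMap_of_semiconj {Q : V ≃ₗ[K] V} (hQ : QCyclic Q w)
    {L : W →ₗ[K] V} {P : W ≃ₗ[K] W} (hL : Function.Semiconj L P Q) :
    QCyclic P (w.compLinearMap fun _ => L) := by
  intro x Y
  rw [compLinearMap_const_snoc, hQ, compLinearMap_const_cons, hL x]

theorem stmt_5_general (Q : V ≃ₗ[K] V) (L : W ≃ₗ[K] V) (hi : Nondeg1 w) (hQ : QCyclic Q w) :
    Nondeg1 (w.compLinearMap fun _ => L.toLinearMap) ∧
    QCyclic ((L.trans Q).trans L.symm) (w.compLinearMap fun _ => L.toLinearMap) :=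
  ⟨hi.compLinearMap_of_bijective L.bijective,
    hQ.compLinearMap_of_semiconj fun x => L.apply_symm_apply (Q (L x))⟩

end Preregular

/-- if `w` is a preregular `m`-linear form (`m = n + 2 ≥ 2`) with associated
automorphism `Q_w = Q`, and `L` is a linear automorphism, then `w∘L` (where
`(w∘L)(X₁,…,X_m) = w(L X₁,…,L X_m)`) is preregular with `Q_{w∘L} = L⁻¹ Q L`. -/
theorem stmt_5 (K V : Type*) [Field K] [AddCommGroup V] [Module K V]
    [FiniteDimensional K V] (n : ℕ)
    (w : MultilinearMap K (fun _ : Fin (n + 2) => V) K)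
    (Q L : V ≃ₗ[K] V) (hi : Nondeg1 w) (hQ : QCyclic Q w) :
    Nondeg1 (w.compLinearMap fun _ => L.toLinearMap) ∧
    QCyclic ((L.trans Q).trans L.symm) (w.compLinearMap fun _ => L.toLinearMap) :=
  stmt_5_general Q L hi hQ
end

section
/- Let K be a field, N ≥ 2 an integer, and ε the completely antisymmetric (N+1)-linear form on K^{N+1} with ε(e₀, e₁, …, e_N) = 1 (the determinant form in the canonical basis). Then ε is 3-regular: (i) ε(X, X₁, …, X_N) = 0 for all X₁,…,X_N implies X = 0; (ii) ε is Q-cyclic for Q = (−1)^N·id; (iii) if L₀ and L₁ are endomorphisms of K^{N+1} satisfying ε(L₀ X₀, X₁, …, X_N) = ε(X₀, L₁ X₁, X₂, …, X_N) for all X₀,…,X_N ∈ K^{N+1}, then L₀ = L₁ = k·id for some k ∈ K. -/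
open Matrix

/-!
The form `ε` is the determinant `b.det` of the standard basis `b`, and up to a sign its value on a
permutation of `b` with one entry replaced by `v` is a coordinate of `v`. This gives (i), and (ii)
is the sign of a cyclic rotation. For (iii), taking `X₀ = X_N = x` makes `ε(X₀, L₁X₁, X₂, …, X_N)`
vanish, hence `ε(L₀x, X₁, …, X_{N-1}, x) = 0` for all other arguments; for `x = b p` this says that
`L₀x` is a multiple of `x`. So `L₀`, and by symmetry `L₁`, is diagonal in `b`. Evaluating on
permutations of `b` shows that the `p`-th diagonal entry of `L₀` equals the `q`-th one of `L₁`
whenever `p ≠ q`, and with three indices at hand all these entries coincide.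
-/

lemma exists_perm_apply_eq_and_apply_eq {α : Type*} {i j p q : α} (hij : i ≠ j) (hpq : p ≠ q) :
    ∃ σ : Equiv.Perm α, σ i = p ∧ σ j = q :=
  MulAction.is_two_pretransitive_iff.mp (Equiv.Perm.isMultiplyPretransitive α 2) hij hpq

lemma alternatingMap_snoc {R M N : Type*} [CommRing R] [AddCommGroup M] [Module R M]
    [AddCommGroup N] [Module R N] {n : ℕ} (ω : M [⋀^Fin (n + 1)]→ₗ[R] N) (Y : Fin n → M) (x : M) :
    ω (Fin.snoc Y x) = ω (Fin.cons ((-1 : R) ^ n • x) Y) := by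
  have hrotate : (Fin.snoc Y x : Fin (n + 1) → M) =
      (Fin.cons x Y : Fin (n + 1) → M) ∘ finRotate (n + 1) := Fin.snoc_eq_cons_rotate Y x
  have hsmul : ω (Fin.cons ((-1 : R) ^ n • x) Y) = (-1 : R) ^ n • ω (Fin.cons x Y) :=
    ω.toMultilinearMap.cons_smul Y _ x
  rw [hrotate, ω.map_perm, sign_finRotate, hsmul]
  simp [Units.smul_def, ← Int.cast_smul_eq_zsmul R]

section Slots

variable {R M N ι : Type*} [Semiring R] [AddCommMonoid M] [Module R M] [AddCommMonoid N]
  [Module R N] [DecidableEq ι]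

/-- Inserting `f` in slot `i` of the form `ω` has the same effect as inserting `g` in slot `j`;
for `i = 0` and `j = 1` this is the premise of condition (iii) of 3-regularity. -/
def SlotsAgree (ω : M [⋀^ι]→ₗ[R] N) (i j : ι) (f g : M →ₗ[R] M) : Prop :=
  ∀ X : ι → M, ω (Function.update X i (f (X i))) = ω (Function.update X j (g (X j)))

namespace SlotsAgree

variable {ω : M [⋀^ι]→ₗ[R] N} {i j k : ι} {f g : M →ₗ[R] M}

lemma symm (h : SlotsAgree ω i j f g) : SlotsAgree ω j i g f := fun X => (h X).symm

lemma map_update_eq_zero (h : SlotsAgree ω i j f g) (hij : i ≠ j) (hik : i ≠ k) (hjk : j ≠ k)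
    {X : ι → M} (hX : X i = X k) : ω (Function.update X i (f (X i))) = 0 := by
  rw [h X]
  refine ω.map_eq_zero_of_eq _ ?_ hik
  rwa [Function.update_of_ne hij, Function.update_of_ne hjk.symm]

end SlotsAgree

end Slots

section BasisDet

open Module

variable {R M ι : Type*} [CommRing R] [AddCommGroup M] [Module R M] [Fintype ι] [DecidableEq ι]
  (b : Basis ι R M)

lemma basis_det_update (i : ι) (v : M) : b.det (Function.update b i v) = b.repr v i := by
  have hlinear : b.det.toMultilinearMap.toLinearMap b i = b.coord i := by
    refine b.ext fun j => ?_
    obtain rfl | hji := eq_or_ne j i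
    · simp [b.det_self]
    · simpa [hji] using b.det.map_update_self b hji.symm
  exact LinearMap.congr_fun hlinear v

lemma basis_det_update_comp_perm (σ : Equiv.Perm ι) (i : ι) (v : M) :
    b.det (Function.update (b ∘ σ) i v) = Equiv.Perm.sign σ • b.repr v (σ i) := by
  have hcomp : Function.update (b ∘ σ) i v = Function.update b (σ i) v ∘ σ := by
    rw [Function.update_comp_equiv, σ.symm_apply_apply]
  rw [hcomp, b.det.map_perm, basis_det_update]

lemma eq_zero_of_basis_det_update_eq_zero {i : ι} {v : M}
    (h : ∀ X : ι → M, b.det (Function.update X i v) = 0) : v = 0 := by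
  refine b.ext_elem fun p => ?_
  have hp := h (b ∘ Equiv.swap i p)
  rw [basis_det_update_comp_perm, smul_eq_zero_iff_eq, Equiv.swap_apply_left] at hp
  rw [hp, map_zero, Finsupp.zero_apply]

namespace SlotsAgree

variable {b} {i j k p q : ι} {f g : M →ₗ[R] M}

lemma repr_apply_eq_zero (h : SlotsAgree b.det i j f g) (hij : i ≠ j) (hik : i ≠ k) (hjk : j ≠ k)
    (hpq : p ≠ q) : b.repr (f (b p)) q = 0 := by
  obtain ⟨σ, hσi, hσk⟩ := exists_perm_apply_eq_and_apply_eq hik hpq.symm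
  have hrepeat : Function.update (b ∘ σ) i (b p) i = Function.update (b ∘ σ) i (b p) k := by
    simp [hik.symm, hσk]
  have hzero := h.map_update_eq_zero hij hik hjk hrepeat
  rwa [Function.update_idem, Function.update_self, basis_det_update_comp_perm,
    smul_eq_zero_iff_eq, hσi] at hzero

lemma apply_basis (h : SlotsAgree b.det i j f g) (hij : i ≠ j) (hik : i ≠ k) (hjk : j ≠ k)
    (p : ι) : f (b p) = b.repr (f (b p)) p • b p := by
  refine b.ext_elem fun q => ?_
  obtain rfl | hpq := eq_or_ne p q
  · simp
  · simp [h.repr_apply_eq_zero hij hik hjk hpq, hpq]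

lemma repr_apply_self_eq (h : SlotsAgree b.det i j f g) (hij : i ≠ j) (hpq : p ≠ q) :
    b.repr (f (b p)) p = b.repr (g (b q)) q := by
  obtain ⟨σ, hσi, hσj⟩ := exists_perm_apply_eq_and_apply_eq hij hpq
  have hσ := h (b ∘ σ)
  rwa [basis_det_update_comp_perm, basis_det_update_comp_perm, smul_left_cancel_iff,
    Function.comp_apply, Function.comp_apply, hσi, hσj] at hσ

theorem exists_eq_smul_id (h : SlotsAgree b.det i j f g) (hij : i ≠ j) (hik : i ≠ k)
    (hjk : j ≠ k) : ∃ c : R, f = c • LinearMap.id ∧ g = c • LinearMap.id := by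
  have hcard : 3 ≤ ENat.card ι := by
    rw [ENat.card_eq_coe_fintype_card]
    exact_mod_cast Fintype.two_lt_card_iff.mpr ⟨i, j, k, hij, hik, hjk⟩
  have hf (p : ι) : b.repr (f (b p)) p = b.repr (f (b i)) i := by
    obtain ⟨q, hqp, hqi⟩ := ENat.exists_ne_ne_of_three_le hcard p i
    rw [h.repr_apply_self_eq hij hqp.symm, h.repr_apply_self_eq hij hqi.symm]
  have hg (p : ι) : b.repr (g (b p)) p = b.repr (f (b i)) i := by
    obtain ⟨q, hqp, -⟩ := ENat.exists_ne_ne_of_three_le hcard p i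
    rw [← h.repr_apply_self_eq hij hqp, hf q]
  refine ⟨b.repr (f (b i)) i, b.ext fun p => ?_, b.ext fun p => ?_⟩
  · rw [h.apply_basis hij hik hjk p, hf p, LinearMap.smul_apply, LinearMap.id_apply]
  · rw [h.symm.apply_basis hij.symm hjk hik p, hg p, LinearMap.smul_apply, LinearMap.id_apply]

end SlotsAgree

end BasisDet

theorem stmt_7_general {R M : Type*} [CommRing R] [AddCommGroup M] [Module R M] {n : ℕ}
    (b : Module.Basis (Fin (n + 3)) R M) :
    (∀ x : M, (∀ Y : Fin (n + 2) → M, b.det (Fin.cons x Y) = 0) → x = 0) ∧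
    (∀ (x : M) (Y : Fin (n + 2) → M),
      b.det (Fin.snoc Y x) = b.det (Fin.cons ((-1 : R) ^ (n + 2) • x) Y)) ∧
    (∀ L₀ L₁ : M →ₗ[R] M,
      (∀ X : Fin (n + 3) → M,
        b.det (Function.update X 0 (L₀ (X 0))) = b.det (Function.update X 1 (L₁ (X 1)))) →
      ∃ k : R, L₀ = k • LinearMap.id ∧ L₁ = k • LinearMap.id) := by
  refine ⟨fun x hx => ?_, fun x Y => alternatingMap_snoc b.det Y x, fun L₀ L₁ hL => ?_⟩
  · refine eq_zero_of_basis_det_update_eq_zero b (i := 0) fun X => ?_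
    rw [← Fin.cons_self_tail X, Fin.update_cons_zero]
    exact hx _
  · have hslots : SlotsAgree b.det 0 1 L₀ L₁ := hL
    exact hslots.exists_eq_smul_id (k := Fin.last (n + 2)) (by simp) (by simp [Fin.ext_iff])
      (by simp [Fin.ext_iff])

/-- the determinant form `ε` on `K^{N+1}` (`N = n + 2 ≥ 2`),
`ε(X₀,…,X_N) = det(X₀,…,X_N)`, is 3-regular:
(i) `ε(X, X₁, …, X_N) = 0` for all `X₁,…,X_N` implies `X = 0`;
(ii) `ε` is `Q`-cyclic for `Q = (−1)^N · id`;
(iii) if `L₀, L₁` are endomorphisms with `ε(L₀X₀, X₁,…,X_N) = ε(X₀, L₁X₁, X₂,…,X_N)`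
for all `X₀,…,X_N`, then `L₀ = L₁ = k · id` for some scalar `k`. -/
theorem stmt_7 (K : Type*) [Field K] (n : ℕ) :
    (∀ x : Fin (n + 3) → K,
      (∀ Y : Fin (n + 2) → (Fin (n + 3) → K),
        (Matrix.of (Fin.cons x Y : Fin (n + 3) → Fin (n + 3) → K)).det = 0) → x = 0) ∧
    (∀ (x : Fin (n + 3) → K) (Y : Fin (n + 2) → (Fin (n + 3) → K)),
      (Matrix.of (Fin.snoc Y x : Fin (n + 3) → Fin (n + 3) → K)).det =
        (Matrix.of (Fin.cons (((-1 : K) ^ (n + 2)) • x) Y : Fin (n + 3) → Fin (n + 3) → K)).det) ∧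
    (∀ L₀ L₁ : (Fin (n + 3) → K) →ₗ[K] (Fin (n + 3) → K),
      (∀ X : Fin (n + 3) → (Fin (n + 3) → K),
        (Matrix.of (Function.update X 0 (L₀ (X 0)))).det =
          (Matrix.of (Function.update X 1 (L₁ (X 1)))).det) →
      ∃ k : K, L₀ = k • LinearMap.id ∧ L₁ = k • LinearMap.id) := by
  simpa only [Pi.basisFun_det_apply] using stmt_7_general (Pi.basisFun K (Fin (n + 3)))
end

section
/- Let K be a field, g ≥ 2, B an invertible g×g matrix over K, and q ∈ K a nonzero scalar satisfying q + q⁻¹ + tr(B⁻¹Bᵗ) = 0. Then the matrix K̂ = q B⁻¹ satisfies the two equations K̂ B K̂ᵗ Bᵗ + (1 + tr(K̂ Bᵗ))·1 = 0 and K̂ᵗ Bᵗ K̂ B + (1 + tr(K̂ Bᵗ))·1 = 0, with 1 + tr(K̂ Bᵗ) = −q². -/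
open Matrix

/-!
Since `K̂B = BK̂ = q·1`, the product `K̂ᵗBᵗ = (BK̂)ᵗ` is again `q·1`, so both quartic products equal
`q²·1`. The Yang–Baxter equations therefore reduce to `1 + tr(K̂Bᵗ) = -q²`, which is the equation
on `q` multiplied by `q`.
-/

section

variable {n R : Type*} [Fintype n]

theorem one_add_trace_smul_eq_neg_sq [CommRing R] {M : Matrix n n R} (q : Rˣ)
    (hq : (q : R) + ↑q⁻¹ + M.trace = 0) : 1 + ((q : R) • M).trace = -(q : R) ^ 2 := by
  rw [trace_smul, smul_eq_mul]
  linear_combination (q : R) * hq - q.mul_inv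

variable [DecidableEq n]

theorem mul_mul_transpose_mul_transpose_of_mul_eq_smul_one [CommSemiring R]
    {A B : Matrix n n R} {a b : R} (hAB : A * B = a • 1) (hBA : B * A = b • 1) :
    A * B * Aᵀ * Bᵀ = (a * b) • 1 :=
  calc
    A * B * Aᵀ * Bᵀ = A * B * (B * A)ᵀ := by rw [transpose_mul, Matrix.mul_assoc]
    _ = (a * b) • 1 := by simp [hAB, hBA, smul_smul, mul_comm]

theorem transpose_mul_transpose_mul_mul_of_mul_eq_smul_one [CommSemiring R]
    {A B : Matrix n n R} {a b : R} (hAB : A * B = a • 1) (hBA : B * A = b • 1) :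
    Aᵀ * Bᵀ * A * B = (a * b) • 1 := by
  have hABt : Aᵀ * Bᵀ = b • 1 := by rw [← transpose_mul, hBA, transpose_smul, transpose_one]
  have hBAt : Bᵀ * Aᵀ = a • 1 := by rw [← transpose_mul, hAB, transpose_smul, transpose_one]
  simpa [mul_comm] using mul_mul_transpose_mul_transpose_of_mul_eq_smul_one hABt hBAt

theorem stmt_11_general [CommRing R] {B : Matrix n n R} (hB : IsUnit B) (q : Rˣ)
    (hq : (q : R) + ↑q⁻¹ + (B⁻¹ * Bᵀ).trace = 0) :
    letI Kh : Matrix n n R := (q : R) • B⁻¹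
    Kh * B * Khᵀ * Bᵀ + (1 + (Kh * Bᵀ).trace) • (1 : Matrix n n R) = 0 ∧
    Khᵀ * Bᵀ * Kh * B + (1 + (Kh * Bᵀ).trace) • (1 : Matrix n n R) = 0 ∧
    1 + (Kh * Bᵀ).trace = -(q : R) ^ 2 := by
  have hdet : IsUnit B.det := (isUnit_iff_isUnit_det B).mp hB
  have hKB : ((q : R) • B⁻¹) * B = (q : R) • 1 := by rw [smul_mul, nonsing_inv_mul B hdet]
  have hBK : B * ((q : R) • B⁻¹) = (q : R) • 1 := by
    rw [Matrix.mul_smul, mul_nonsing_inv B hdet]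
  have htrace : 1 + (((q : R) • B⁻¹) * Bᵀ).trace = -(q : R) ^ 2 := by
    rw [smul_mul, one_add_trace_smul_eq_neg_sq q hq]
  have hcancel : ((q : R) * q) • (1 : Matrix n n R) + (-(q : R) ^ 2) • 1 = 0 := by
    rw [← add_smul, ← sq, add_neg_cancel, zero_smul]
  refine ⟨?_, ?_, htrace⟩
  · rw [htrace, mul_mul_transpose_mul_transpose_of_mul_eq_smul_one hKB hBK, hcancel]
  · rw [htrace, transpose_mul_transpose_mul_mul_of_mul_eq_smul_one hKB hBK, hcancel]

end

/-- if `B` is an invertible `g×g` matrix (`g ≥ 2`) and `q ≠ 0` satisfies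
`q + q⁻¹ + tr(B⁻¹Bᵗ) = 0`, then `K̂ = q B⁻¹` satisfies
`K̂ B K̂ᵗ Bᵗ + (1 + tr(K̂ Bᵗ))·1 = 0` and `K̂ᵗ Bᵗ K̂ B + (1 + tr(K̂ Bᵗ))·1 = 0`,
with `1 + tr(K̂ Bᵗ) = −q²`. -/
theorem stmt_11 (K : Type*) [Field K] (g : ℕ) (hg : 2 ≤ g)
    (B : Matrix (Fin g) (Fin g) K) (hB : IsUnit B)
    (q : K) (hq : q ≠ 0) (hsol : q + q⁻¹ + (B⁻¹ * Bᵀ).trace = 0) :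
    letI Kh : Matrix (Fin g) (Fin g) K := q • B⁻¹
    Kh * B * Khᵀ * Bᵀ + (1 + (Kh * Bᵀ).trace) • (1 : Matrix (Fin g) (Fin g) K) = 0 ∧
    Khᵀ * Bᵀ * Kh * B + (1 + (Kh * Bᵀ).trace) • (1 : Matrix (Fin g) (Fin g) K) = 0 ∧
    1 + (Kh * Bᵀ).trace = -q ^ 2 :=
  stmt_11_general hB (Units.mk0 q hq) hsol
end

section
/- Let K be an algebraically closed field with char K ≠ 2 and let B be an invertible 2×2 matrix over K. Then there exists L ∈ GL(2, K) such that Lᵗ B L is one of the following matrices: (0) [[0,−1],[1,0]]; (1) [[0,−1],[1,1]]; (2) [[0,−1],[q,0]] for some q ∈ K with q² − q ≠ 0. Moreover, for q, q′ ∈ K with q² − q ≠ 0 and q′² − q′ ≠ 0, there exists L ∈ GL(2, K) with Lᵗ [[0,−1],[q,0]] L = [[0,−1],[q′,0]] if and only if q′ = q or q′ = q⁻¹. -/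
open Matrix

/-!
The columns of `L` form a new basis, so the classification is a choice of adapted basis. A nonzero
isotropic vector, found by solving a quadratic equation, puts a zero in the upper left corner, and
rescaling turns the matrix into `[[0, -1], [q, d]]` with `q ≠ 0`. If `q ≠ 1`, a shear removes `d`;
if `q = 1`, either `d = 0` or a rescaling by a square root of `d⁻¹` makes it `1`.

For the uniqueness of `q`, both `det B` and `tr (adj Bᵀ * B)` get multiplied by `(det L)²` under
congruence. On `[[0, -1], [q, 0]]` they take the values `q` and `-(q² + 1)`, so congruence forces
`q' (q² + 1) = q (q'² + 1)`, that is, `(q' - q) (q q' - 1) = 0`.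
-/

theorem transpose_fin_two_of {α : Type*} (a b c d : α) : !![a, b; c, d]ᵀ = !![a, c; b, d] :=
  eta_fin_two _

/-- Two square matrices are congruent if they represent the same bilinear form in two bases; the
columns of `L` are the new basis vectors. -/
def IsCongruent {n R : Type*} [Fintype n] [DecidableEq n] [CommRing R] (A B : Matrix n n R) :
    Prop :=
  ∃ L : Matrix n n R, IsUnit L ∧ Lᵀ * A * L = B

namespace IsCongruent

section Square

variable {n R : Type*} [Fintype n] [DecidableEq n] [CommRing R] {A B C : Matrix n n R}

theorem refl (A : Matrix n n R) : IsCongruent A A :=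
  ⟨1, isUnit_one, by rw [transpose_one, Matrix.one_mul, Matrix.mul_one]⟩

theorem trans (hAB : IsCongruent A B) (hBC : IsCongruent B C) : IsCongruent A C := by
  obtain ⟨L, hL, rfl⟩ := hAB
  obtain ⟨M, hM, rfl⟩ := hBC
  exact ⟨L * M, hL.mul hM, by simp only [transpose_mul, Matrix.mul_assoc]⟩

theorem isUnit (hAB : IsCongruent A B) (hA : IsUnit A) : IsUnit B := by
  obtain ⟨L, hL, rfl⟩ := hAB
  exact (((isUnit_transpose L).2 hL).mul hA).mul hL

end Square

section FinTwo

variable {R : Type*} [CommRing R]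

theorem swap (a b c d : R) : IsCongruent !![a, b; c, d] !![d, c; b, a] :=
  ⟨!![0, 1; 1, 0], by simp [isUnit_iff_isUnit_det], by simp [transpose_fin_two_of]⟩

theorem scale {s t : R} (hs : IsUnit s) (ht : IsUnit t) (a b c d : R) :
    IsCongruent !![a, b; c, d] !![s ^ 2 * a, s * t * b; s * t * c, t ^ 2 * d] := by
  refine ⟨!![s, 0; 0, t], by simpa [isUnit_iff_isUnit_det] using ⟨hs, ht⟩, ?_⟩
  simp only [transpose_fin_two_of, mul_fin_two]
  ring_nf

theorem shear (u a b c d : R) :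
    IsCongruent !![a, b; c, d]
      !![a, b + u * a; c + u * a, a * u ^ 2 + (b + c) * u + d] := by
  refine ⟨!![1, u; 0, 1], by simp [isUnit_iff_isUnit_det], ?_⟩
  simp only [transpose_fin_two_of, mul_fin_two]
  ring_nf

end FinTwo

end IsCongruent

section Invariants

variable {n R : Type*} [Fintype n] [DecidableEq n] [CommRing R]

theorem det_transpose_mul_mul (B L : Matrix n n R) :
    (Lᵀ * B * L).det = L.det ^ 2 * B.det := by
  rw [det_mul, det_mul, det_transpose]
  ring

theorem trace_adjugate_transpose_mul_congr (B L : Matrix n n R) :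
    trace (adjugate (Lᵀ * B * L)ᵀ * (Lᵀ * B * L)) = L.det ^ 2 * trace (adjugate Bᵀ * B) := by
  have adjugate_congr : adjugate (Lᵀ * B * L)ᵀ = adjugate L * adjugate Bᵀ * adjugate Lᵀ := by
    simp only [transpose_mul, transpose_transpose, adjugate_mul_distrib, Matrix.mul_assoc]
  calc trace (adjugate (Lᵀ * B * L)ᵀ * (Lᵀ * B * L))
      = trace (adjugate L * (adjugate Bᵀ * (adjugate Lᵀ * Lᵀ) * B * L)) := by
        rw [adjugate_congr]
        simp only [Matrix.mul_assoc]
    _ = L.det * trace (adjugate L * (adjugate Bᵀ * B * L)) := by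
        simp [adjugate_mul, det_transpose]
    _ = L.det * trace (adjugate Bᵀ * B * (L * adjugate L)) := by
        rw [trace_mul_comm, Matrix.mul_assoc]
    _ = L.det ^ 2 * trace (adjugate Bᵀ * B) := by
        simp [mul_adjugate, pow_two, mul_assoc]

theorem trace_adjugate_transpose_mul_antidiagonal (q : R) :
    trace (adjugate !![0, -1; q, 0]ᵀ * !![0, -1; q, 0]) = -(q ^ 2 + 1) := by
  rw [transpose_fin_two_of, adjugate_fin_two_of, mul_fin_two, trace_fin_two_of]
  ring

end Invariants

theorem IsCongruent.eq_or_mul_eq_one {R : Type*} [CommRing R] [NoZeroDivisors R] {q q' : R}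
    (h : IsCongruent !![0, -1; q, 0] !![0, -1; q', 0]) : q' = q ∨ q' * q = 1 := by
  obtain ⟨L, -, hL⟩ := h
  have det_eq : q' = L.det ^ 2 * q := by
    simpa [hL] using det_transpose_mul_mul !![0, -1; q, 0] L
  have trace_eq : -(q' ^ 2 + 1) = L.det ^ 2 * -(q ^ 2 + 1) := by
    simpa only [hL, trace_adjugate_transpose_mul_antidiagonal] using
      trace_adjugate_transpose_mul_congr !![0, -1; q, 0] L
  have factored : (q' - q) * (q' * q - 1) = 0 := by
    linear_combination -q * trace_eq - (q ^ 2 + 1) * det_eq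
  exact (mul_eq_zero.1 factored).imp sub_eq_zero.1 sub_eq_zero.1

/-- A field is quadratically closed if every monic quadratic polynomial has a root. In
characteristic `2` this asks for more than the existence of square roots. -/
def IsQuadraticallyClosed (K : Type*) [Field K] : Prop :=
  ∀ b c : K, ∃ x : K, x ^ 2 + b * x + c = 0

theorem isQuadraticallyClosed_of_isAlgClosed (K : Type*) [Field K] [IsAlgClosed K] :
    IsQuadraticallyClosed K := by
  intro b c
  obtain ⟨x, hx⟩ := IsAlgClosed.exists_root
    (Polynomial.C 1 * Polynomial.X ^ 2 + Polynomial.C b * Polynomial.X + Polynomial.C c)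
    (by rw [Polynomial.degree_quadratic one_ne_zero]; decide)
  exact ⟨x, by simpa [Polynomial.IsRoot] using hx⟩

namespace IsQuadraticallyClosed

variable {K : Type*} [Field K]

theorem exists_quadratic_eq_zero (hK : IsQuadraticallyClosed K) {a : K} (ha : a ≠ 0) (b c : K) :
    ∃ x, a * x ^ 2 + b * x + c = 0 := by
  obtain ⟨x, hx⟩ := hK (b / a) (c / a)
  refine ⟨x, ?_⟩
  field_simp at hx
  linear_combination hx

theorem exists_sq_eq (hK : IsQuadraticallyClosed K) (a : K) : ∃ x, x ^ 2 = a := by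
  obtain ⟨x, hx⟩ := hK 0 (-a)
  exact ⟨x, by linear_combination hx⟩

end IsQuadraticallyClosed

theorem sq_sub_self_ne_zero_iff {R : Type*} [Ring R] [NoZeroDivisors R] {q : R} :
    q ^ 2 - q ≠ 0 ↔ q ≠ 0 ∧ q ≠ 1 := by
  rw [sq, ← mul_sub_one, mul_ne_zero_iff, sub_ne_zero]

/-- The normal forms of nondegenerate bilinear forms on the plane, belonging to the polynomial
plane, the Jordanian plane and the Manin planes. -/
def IsNormalForm {K : Type*} [Field K] (N : Matrix (Fin 2) (Fin 2) K) : Prop :=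
  N = !![0, -1; 1, 0] ∨ N = !![0, -1; 1, 1] ∨ ∃ q : K, q ^ 2 - q ≠ 0 ∧ N = !![0, -1; q, 0]

section Classification

variable {K : Type*} [Field K]

theorem isCongruent_antidiagonal_iff {q q' : K} (hq : q ≠ 0) :
    IsCongruent !![0, -1; q, 0] !![0, -1; q', 0] ↔ q' = q ∨ q' = q⁻¹ := by
  refine ⟨fun h => h.eq_or_mul_eq_one.imp_right eq_inv_of_mul_eq_one_left, ?_⟩
  rintro (rfl | rfl)
  · exact .refl _
  · refine (IsCongruent.swap _ _ _ _).trans ?_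
    simpa [hq] using
      IsCongruent.scale (neg_ne_zero.2 (inv_ne_zero hq)).isUnit isUnit_one 0 q (-1) 0

theorem exists_isCongruent_zero_upper_left (hK : IsQuadraticallyClosed K)
    (B : Matrix (Fin 2) (Fin 2) K) :
    ∃ b c d : K, IsCongruent B !![0, b; c, d] := by
  obtain ⟨a, b, c, d, rfl⟩ : ∃ a b c d : K, B = !![a, b; c, d] := ⟨_, _, _, _, eta_fin_two B⟩
  by_cases ha : a = 0
  · subst ha
    exact ⟨b, c, d, .refl _⟩
  · obtain ⟨u, hu⟩ := hK.exists_quadratic_eq_zero ha (b + c) d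
    have sheared := IsCongruent.shear u a b c d
    rw [hu] at sheared
    exact ⟨_, _, _, sheared.trans (.swap _ _ _ _)⟩

theorem exists_isCongruent_upper_row_zero_neg_one (hK : IsQuadraticallyClosed K)
    {B : Matrix (Fin 2) (Fin 2) K} (hB : IsUnit B) :
    ∃ q d : K, q ≠ 0 ∧ IsCongruent B !![0, -1; q, d] := by
  obtain ⟨b, c, d, hcongr⟩ := exists_isCongruent_zero_upper_left hK B
  obtain ⟨hb, hc⟩ : b ≠ 0 ∧ c ≠ 0 := by
    simpa [isUnit_iff_isUnit_det] using hcongr.isUnit hB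
  have hs : -b⁻¹ ≠ 0 := neg_ne_zero.2 (inv_ne_zero hb)
  refine ⟨-b⁻¹ * c, d, mul_ne_zero hs hc, hcongr.trans ?_⟩
  simpa [hb] using IsCongruent.scale hs.isUnit isUnit_one 0 b c d

theorem isCongruent_antidiagonal_of_ne_one {q : K} (hq : q ≠ 1) (d : K) :
    IsCongruent !![0, -1; q, d] !![0, -1; q, 0] := by
  have hq' : -1 + q ≠ 0 := by rwa [neg_add_eq_sub, sub_ne_zero]
  simpa [mul_div_cancel₀ _ hq'] using IsCongruent.shear (-d / (-1 + q)) 0 (-1) q d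

theorem isCongruent_jordanian (hK : IsQuadraticallyClosed K) {d : K} (hd : d ≠ 0) :
    IsCongruent !![0, -1; 1, d] !![0, -1; 1, 1] := by
  obtain ⟨t, ht⟩ := hK.exists_sq_eq d⁻¹
  have ht0 : t ≠ 0 := by
    rintro rfl
    exact inv_ne_zero hd (by simpa using ht.symm)
  simpa [ht0, ht, hd] using
    IsCongruent.scale (inv_ne_zero ht0).isUnit ht0.isUnit 0 (-1) 1 d

theorem exists_isCongruent_isNormalForm (hK : IsQuadraticallyClosed K)
    {B : Matrix (Fin 2) (Fin 2) K} (hB : IsUnit B) :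
    ∃ N, IsCongruent B N ∧ IsNormalForm N := by
  obtain ⟨q, d, hq0, hcongr⟩ := exists_isCongruent_upper_row_zero_neg_one hK hB
  by_cases hq1 : q = 1
  · subst hq1
    by_cases hd : d = 0
    · subst hd
      exact ⟨_, hcongr, .inl rfl⟩
    · exact ⟨_, hcongr.trans (isCongruent_jordanian hK hd), .inr (.inl rfl)⟩
  · exact ⟨_, hcongr.trans (isCongruent_antidiagonal_of_ne_one hq1 d),
      .inr (.inr ⟨q, sq_sub_self_ne_zero_iff.2 ⟨hq0, hq1⟩, rfl⟩)⟩

end Classification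

theorem stmt_12_general {K : Type*} [Field K] (hK : IsQuadraticallyClosed K) :
    (∀ B : Matrix (Fin 2) (Fin 2) K, IsUnit B →
      ∃ L : Matrix (Fin 2) (Fin 2) K, IsUnit L ∧ IsNormalForm (Lᵀ * B * L)) ∧
    (∀ q q' : K, q ≠ 0 →
      (IsCongruent !![0, -1; q, 0] !![0, -1; q', 0] ↔ (q' = q ∨ q' = q⁻¹))) := by
  refine ⟨fun B hB => ?_, fun q q' hq => isCongruent_antidiagonal_iff hq⟩
  obtain ⟨_, ⟨L, hL, rfl⟩, hN⟩ := exists_isCongruent_isNormalForm hK hB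
  exact ⟨L, hL, hN⟩

/-- over an algebraically closed field of characteristic `≠ 2`, every
invertible `2×2` matrix `B` is congruent (`B ↦ Lᵀ B L`, `L ∈ GL(2,K)`) to one of:
`[[0,−1],[1,0]]`, `[[0,−1],[1,1]]`, or `[[0,−1],[q,0]]` with `q² − q ≠ 0`; moreover the
matrices `[[0,−1],[q,0]]` and `[[0,−1],[q′,0]]` (with `q² − q ≠ 0`, `q′² − q′ ≠ 0`) are
congruent if and only if `q′ = q` or `q′ = q⁻¹`. -/
theorem stmt_12 (K : Type*) [Field K] [IsAlgClosed K] (hchar : ringChar K ≠ 2) :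
    (∀ B : Matrix (Fin 2) (Fin 2) K, IsUnit B →
      ∃ L : Matrix (Fin 2) (Fin 2) K, IsUnit L ∧
        (Lᵀ * B * L = !![0, -1; 1, 0] ∨
         Lᵀ * B * L = !![0, -1; 1, 1] ∨
         ∃ q : K, q ^ 2 - q ≠ 0 ∧ Lᵀ * B * L = !![0, -1; q, 0])) ∧
    (∀ q q' : K, q ^ 2 - q ≠ 0 → q' ^ 2 - q' ≠ 0 →
      ((∃ L : Matrix (Fin 2) (Fin 2) K, IsUnit L ∧
          Lᵀ * !![0, -1; q, 0] * L = !![0, -1; q', 0]) ↔ (q' = q ∨ q' = q⁻¹))) := by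
  obtain ⟨classification, uniqueness⟩ :=
    stmt_12_general (isQuadraticallyClosed_of_isAlgClosed K)
  exact ⟨classification, fun q q' hq _ => uniqueness q q' (sq_sub_self_ne_zero_iff.1 hq).1⟩
end

section
/- Let K be a field and let A be the quotient of the free associative unital K-algebra on three generators x, y, z by the two-sided ideal generated by the three elements x² + yz, y² + zx, and xy. Then in A one has (yz)x = 0 and (yz)y = 0, but there is no element a ∈ A such that a·x = yz, a·y = 0 and a·z = 0. (Consequently the complex 0 → A → A³ → A³ → A → K → 0 built from the presentation fails to be exact at the second position, so A is not a regular algebra of global dimension 3 even though its associated 3-linear form w = x⊗x⊗x + y⊗y⊗y + x⊗y⊗z + y⊗z⊗x + z⊗x⊗y is 3-regular with Q_w = id.) -/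
/-- The relations `x² + yz = 0`, `y² + zx = 0`, `xy = 0` on the free algebra on three
generators `x = ι 0`, `y = ι 1`, `z = ι 2`. -/
def counterRel (K : Type*) [Field K] :
    FreeAlgebra K (Fin 3) → FreeAlgebra K (Fin 3) → Prop := fun a b =>
  b = 0 ∧
    (a = FreeAlgebra.ι K 0 * FreeAlgebra.ι K 0 + FreeAlgebra.ι K 1 * FreeAlgebra.ι K 2 ∨
     a = FreeAlgebra.ι K 1 * FreeAlgebra.ι K 1 + FreeAlgebra.ι K 2 * FreeAlgebra.ι K 0 ∨
     a = FreeAlgebra.ι K 0 * FreeAlgebra.ι K 1)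

/-!
Since `xy = 0`, multiplying `x² + yz = 0` by `x` on the left gives `x³ = 0`, and multiplying it by
`x` or `y` on the right then gives `(yz)x = 0` or `(yz)y = 0`. Any `a` with `ax = yz` and `az = 0`
would satisfy `a(x - z) = yz`. Elements `p`, `q` of any algebra with `p² = pq = q² = 0` give a
representation `x ↦ p + q`, `y ↦ -q`, `z ↦ p`, under which this equation becomes `aq = -qp`. For
the matrix units `p = E₁₀`, `q = E₂₁` it fails, since `aq` has zero column `0` while `qp = E₂₀`.
-/

section NonUnitalSemiring

variable {S : Type*} [NonUnitalSemiring S] {x y z : S}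

theorem yz_mul_x_eq_zero (hxx : x * x + y * z = 0) (hxy : x * y = 0) : y * z * x = 0 := by
  have cube_eq_zero : x * x * x = 0 :=
    calc x * x * x = x * (x * x + y * z) := by
          rw [mul_add, ← mul_assoc x y z, hxy, zero_mul, add_zero, mul_assoc]
      _ = 0 := by rw [hxx, mul_zero]
  calc y * z * x = (x * x + y * z) * x := by rw [add_mul, cube_eq_zero, zero_add]
    _ = 0 := by rw [hxx, zero_mul]

theorem yz_mul_y_eq_zero (hxx : x * x + y * z = 0) (hxy : x * y = 0) : y * z * y = 0 :=
  calc y * z * y = (x * x + y * z) * y := by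
        rw [add_mul, mul_assoc x x y, hxy, mul_zero, zero_add]
    _ = 0 := by rw [hxx, zero_mul]

end NonUnitalSemiring

/-- The relations of `counterRel` over an arbitrary commutative semiring, written in the same form
so that `counterRelOver K` and `counterRel K` are definitionally equal for a field `K`. -/
def counterRelOver (R : Type*) [CommSemiring R] :
    FreeAlgebra R (Fin 3) → FreeAlgebra R (Fin 3) → Prop := fun a b =>
  b = 0 ∧
    (a = FreeAlgebra.ι R 0 * FreeAlgebra.ι R 0 + FreeAlgebra.ι R 1 * FreeAlgebra.ι R 2 ∨
     a = FreeAlgebra.ι R 1 * FreeAlgebra.ι R 1 + FreeAlgebra.ι R 2 * FreeAlgebra.ι R 0 ∨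
     a = FreeAlgebra.ι R 0 * FreeAlgebra.ι R 1)

/-- The algebra `R⟨x, y, z⟩/[x² + yz, y² + zx, xy]`. -/
abbrev CounterAlgebra (R : Type*) [CommSemiring R] : Type _ :=
  RingQuot (counterRelOver R)

namespace CounterAlgebra

section CommSemiring

variable (R : Type*) [CommSemiring R]

/-- The generators of `CounterAlgebra R`: `x`, `y`, `z` are `gen R 0`, `gen R 1`, `gen R 2`. -/
def gen (i : Fin 3) : CounterAlgebra R :=
  RingQuot.mkAlgHom R (counterRelOver R) (FreeAlgebra.ι R i)

theorem gen_zero_mul_self_add : gen R 0 * gen R 0 + gen R 1 * gen R 2 = 0 := by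
  simpa only [gen, map_add, map_mul, map_zero] using
    RingQuot.mkAlgHom_rel R (s := counterRelOver R) ⟨rfl, Or.inl rfl⟩

theorem gen_zero_mul_gen_one : gen R 0 * gen R 1 = 0 := by
  simpa only [gen, map_mul, map_zero] using
    RingQuot.mkAlgHom_rel R (s := counterRelOver R) ⟨rfl, Or.inr (Or.inr rfl)⟩

variable {R} {B : Type*} [Semiring B] [Algebra R B]

/-- The universal property of `CounterAlgebra R`: the algebra homomorphism sending the generators
to elements of `B` that satisfy the defining relations. -/
def lift (v : Fin 3 → B) (hxx : v 0 * v 0 + v 1 * v 2 = 0) (hyy : v 1 * v 1 + v 2 * v 0 = 0)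
    (hxy : v 0 * v 1 = 0) : CounterAlgebra R →ₐ[R] B :=
  RingQuot.liftAlgHom R ⟨FreeAlgebra.lift R v, by
    rintro _ _ ⟨rfl, rfl | rfl | rfl⟩ <;>
      simpa only [map_add, map_mul, map_zero, FreeAlgebra.lift_ι_apply]⟩

theorem lift_gen (v : Fin 3 → B) (hxx : v 0 * v 0 + v 1 * v 2 = 0)
    (hyy : v 1 * v 1 + v 2 * v 0 = 0) (hxy : v 0 * v 1 = 0) (i : Fin 3) :
    lift (R := R) v hxx hyy hxy (gen R i) = v i := by
  rw [lift, gen, RingQuot.liftAlgHom_mkAlgHom_apply, FreeAlgebra.lift_ι_apply]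

end CommSemiring

theorem exists_algHom_of_mul_eq_zero {R B : Type*} [CommSemiring R] [Ring B] [Algebra R B]
    {p q : B} (hpp : p * p = 0) (hpq : p * q = 0) (hqq : q * q = 0) :
    ∃ f : CounterAlgebra R →ₐ[R] B, f (gen R 0) = p + q ∧ f (gen R 1) = -q ∧ f (gen R 2) = p := by
  have hxx : (p + q) * (p + q) + -q * p = 0 := by
    simp only [add_mul, mul_add, neg_mul, hpp, hpq, hqq]
    abel
  have hyy : -q * -q + p * (p + q) = 0 := by
    simp only [mul_add, neg_mul_neg, hpp, hpq, hqq, add_zero]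
  have hxy : (p + q) * -q = 0 := by
    simp only [mul_neg, add_mul, hpq, hqq, add_zero, neg_zero]
  exact ⟨lift ![p + q, -q, p] hxx hyy hxy, lift_gen _ hxx hyy hxy 0, lift_gen _ hxx hyy hxy 1,
    lift_gen _ hxx hyy hxy 2⟩

theorem mul_gen_zero_sub_gen_two_ne {R : Type*} [CommRing R] [Nontrivial R]
    (a : CounterAlgebra R) : a * (gen R 0 - gen R 2) ≠ gen R 1 * gen R 2 := by
  intro ha
  let p : Matrix (Fin 3) (Fin 3) R := .single 1 0 1
  let q : Matrix (Fin 3) (Fin 3) R := .single 2 1 1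
  have hpp : p * p = 0 := Matrix.single_mul_single_of_ne _ _ _ _ (by decide) _
  have hpq : p * q = 0 := Matrix.single_mul_single_of_ne _ _ _ _ (by decide) _
  have hqq : q * q = 0 := Matrix.single_mul_single_of_ne _ _ _ _ (by decide) _
  have hqp : q * p = .single 2 0 1 := by
    rw [Matrix.single_mul_single_same, one_mul]
  obtain ⟨f, hx, hy, hz⟩ := exists_algHom_of_mul_eq_zero (R := R) hpp hpq hqq
  have image_eq : f a * q = -.single 2 0 1 := by
    simpa only [map_mul, map_sub, hx, hy, hz, add_sub_cancel_left, neg_mul, hqp] using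
      congrArg f ha
  have entry_eq_zero : (f a * q) 2 0 = 0 :=
    Matrix.mul_single_apply_of_ne _ _ _ _ _ (by decide) _
  rw [image_eq, Matrix.neg_apply, Matrix.single_apply_same, neg_eq_zero] at entry_eq_zero
  exact one_ne_zero entry_eq_zero

end CounterAlgebra

open CounterAlgebra in
theorem stmt_13_general (R : Type*) [CommRing R] [Nontrivial R] :
    gen R 1 * gen R 2 * gen R 0 = 0 ∧ gen R 1 * gen R 2 * gen R 1 = 0 ∧
      ∀ a : CounterAlgebra R, a * (gen R 0 - gen R 2) ≠ gen R 1 * gen R 2 :=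
  ⟨yz_mul_x_eq_zero (gen_zero_mul_self_add R) (gen_zero_mul_gen_one R),
    yz_mul_y_eq_zero (gen_zero_mul_self_add R) (gen_zero_mul_gen_one R),
    mul_gen_zero_sub_gen_two_ne⟩

/-- in `A = K⟨x,y,z⟩/[x² + yz, y² + zx, xy]` one has `(yz)x = 0` and
`(yz)y = 0`, but there is no `a ∈ A` with `a·x = yz`, `a·y = 0` and `a·z = 0`. -/
theorem stmt_13 (K : Type*) [Field K] :
    letI π := RingQuot.mkAlgHom K (counterRel K)
    letI x := π (FreeAlgebra.ι K 0)
    letI y := π (FreeAlgebra.ι K 1)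
    letI z := π (FreeAlgebra.ι K 2)
    (y * z) * x = 0 ∧ (y * z) * y = 0 ∧
      ¬ ∃ a : RingQuot (counterRel K), a * x = y * z ∧ a * y = 0 ∧ a * z = 0 := by
  obtain ⟨hyzx, hyzy, hne⟩ := stmt_13_general K
  exact ⟨hyzx, hyzy, fun ⟨a, hx, _, hz⟩ => hne a <|
    (mul_sub a _ _).trans ((congrArg₂ (· - ·) hx hz).trans (sub_zero _))⟩
end

section
/- Let K be a field with char K = 0, n ≥ 2, and G = (G^{λμ}) an invertible symmetric n×n matrix over K. Let w be the 4-linear form on K^n with components W^{abcd} = w(e_a, e_b, e_c, e_d) = G^{ab}G^{cd} + G^{bc}G^{da} − 2 G^{ac}G^{bd}. Then: (1) w is cyclic, i.e. W^{abcd} = W^{dabc} for all indices (so w is Q-cyclic with Q_w = id); (2) w satisfies condition (i): w(X, X₁, X₂, X₃) = 0 for all X₁, X₂, X₃ implies X = 0; (3) w satisfies the strong condition (iii′): for any finite families (Yᵢ), (Zᵢ) in K^n, if Σᵢ w(Yᵢ, Zᵢ, X₁, X₂) = 0 for all X₁, X₂ ∈ K^n then Σᵢ Yᵢ ⊗ Zᵢ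 = 0 in K^n ⊗ K^n. -/
open Matrix
open scoped TensorProduct

/-- The pairing `g(X,Y) = Σ_{a,b} G^{ab} X_a Y_b` of a symmetric matrix `G`. -/
def gPair {K : Type*} [Field K] {n : ℕ} (G : Matrix (Fin n) (Fin n) K)
    (X Y : Fin n → K) : K :=
  ∑ a : Fin n, ∑ b : Fin n, G a b * X a * Y b

/-- The Yang–Mills 4-linear form, with components
`W^{abcd} = G^{ab}G^{cd} + G^{bc}G^{da} − 2 G^{ac}G^{bd}`. -/
def ymForm {K : Type*} [Field K] {n : ℕ} (G : Matrix (Fin n) (Fin n) K)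
    (X₁ X₂ X₃ X₄ : Fin n → K) : K :=
  gPair G X₁ X₂ * gPair G X₃ X₄ + gPair G X₂ X₃ * gPair G X₄ X₁ -
    2 * gPair G X₁ X₃ * gPair G X₂ X₄

/-!
Fix a basis `b` and its dual basis `c` with respect to the form `g`. Contracting the last two
arguments of `w` against the pair `(b, c)` gives `Σⱼ w(x, y, bⱼ, cⱼ) = (dim V - 1) g(x, y)`, so
condition (i) follows from the nondegeneracy of `g`. For a family killed by `w` the same contraction
gives `Σᵢ g(Yᵢ, Zᵢ) = 0`, so that `t(x, x') = Σᵢ g(Yᵢ, x) g(Zᵢ, x')` satisfies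
`t(x', x) = 2 t(x, x')`. Applying this twice yields `3 t = 0`, and `t` determines `Σᵢ Yᵢ ⊗ Zᵢ`.
-/

section DualBasis

variable {K V W κ : Type*} [Field K] [AddCommGroup V] [Module K V] [AddCommGroup W] [Module K W]
  {B : LinearMap.BilinForm K V} {C : LinearMap.BilinForm K W}

theorem sum_apply_mul_dualBasis_apply [Fintype κ] [DecidableEq κ] (hB : B.Nondegenerate)
    (b : Module.Basis κ K V) (x y : V) :
    ∑ j, B x (b j) * B (B.dualBasis hB b j) y = B x y := by
  conv_rhs => rw [← (B.dualBasis hB b).sum_repr x]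
  simp

theorem sum_tmul_eq_zero_of_sum_apply_mul_apply_eq_zero [FiniteDimensional K V]
    [FiniteDimensional K W] (hB : B.Nondegenerate) (hC : C.Nondegenerate) {ι : Type*} [Fintype ι]
    {Y : ι → V} {Z : ι → W} (h : ∀ x x', ∑ i, B (Y i) x * C (Z i) x' = 0) :
    ∑ i, Y i ⊗ₜ[K] Z i = 0 := by
  let b := Module.finBasis K V
  let c := Module.finBasis K W
  apply ((B.dualBasis hB b).tensorProduct (C.dualBasis hC c)).repr.injective
  ext ⟨j, l⟩
  simpa [Finsupp.finsetSum_apply, mul_comm] using h (b j) (c l)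

end DualBasis

section Definition

variable {R M : Type*} [CommRing R] [AddCommGroup M] [Module R M]

/-- The Yang–Mills 4-linear form attached to a bilinear form `B` on a module, as a function of its
four arguments. It is the coordinate-free version of `ymForm`, the role of `gPair G` being played
by `B`. -/
def yangMillsForm (B : LinearMap.BilinForm R M) (x₁ x₂ x₃ x₄ : M) : R :=
  B x₁ x₂ * B x₃ x₄ + B x₂ x₃ * B x₄ x₁ - 2 * B x₁ x₃ * B x₂ x₄

theorem yangMillsForm_cyclic {B : LinearMap.BilinForm R M} (hsymm : B.IsSymm) (x₁ x₂ x₃ x₄ : M) :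
    yangMillsForm B x₁ x₂ x₃ x₄ = yangMillsForm B x₄ x₁ x₂ x₃ := by
  simp only [yangMillsForm, hsymm.eq x₄]
  ring

end Definition

section Nondegenerate

variable {K V : Type*} [Field K] [AddCommGroup V] [Module K V]
  {B : LinearMap.BilinForm K V}

theorem sum_yangMillsForm_dualBasis {κ : Type*} [Fintype κ] [DecidableEq κ] (hsymm : B.IsSymm)
    (hB : B.Nondegenerate) (b : Module.Basis κ K V) (x y : V) :
    ∑ j, yangMillsForm B x y (b j) (B.dualBasis hB b j) = (Module.finrank K V - 1) * B x y := by
  have hdual (j : κ) : B (b j) (B.dualBasis hB b j) = 1 := by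
    simp [B.apply_dualBasis_right hB hsymm]
  calc ∑ j, yangMillsForm B x y (b j) (B.dualBasis hB b j)
      = ∑ j, (B x y + B y (b j) * B (B.dualBasis hB b j) x
          - 2 * (B x (b j) * B (B.dualBasis hB b j) y)) := by
        simp only [yangMillsForm, hdual, hsymm.eq y (B.dualBasis hB b _), mul_one, mul_assoc]
    _ = Module.finrank K V * B x y + B y x - 2 * B x y := by
        simp only [Finset.sum_sub_distrib, Finset.sum_add_distrib, ← Finset.mul_sum,
          sum_apply_mul_dualBasis_apply, Finset.sum_const, Finset.card_univ, nsmul_eq_mul,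
          Module.finrank_eq_card_basis b]
    _ = (Module.finrank K V - 1) * B x y := by
        rw [hsymm.eq y x]
        ring

variable [FiniteDimensional K V]

theorem eq_zero_of_yangMillsForm_eq_zero (hsymm : B.IsSymm) (hB : B.Nondegenerate)
    (hdim : (Module.finrank K V : K) ≠ 1) {x : V}
    (h : ∀ x₁ x₂ x₃, yangMillsForm B x x₁ x₂ x₃ = 0) : x = 0 := by
  refine hB.1 x fun y => ?_
  have hcontract := sum_yangMillsForm_dualBasis hsymm hB (Module.finBasis K V) x y
  simp only [h, Finset.sum_const_zero] at hcontract
  exact (mul_eq_zero.1 hcontract.symm).resolve_left (sub_ne_zero.2 hdim)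

variable {ι : Type*} [Fintype ι] {Y Z : ι → V}

theorem sum_apply_eq_zero_of_sum_yangMillsForm_eq_zero (hsymm : B.IsSymm) (hB : B.Nondegenerate)
    (hdim : (Module.finrank K V : K) ≠ 1)
    (h : ∀ x x', ∑ i, yangMillsForm B (Y i) (Z i) x x' = 0) : ∑ i, B (Y i) (Z i) = 0 := by
  let b := Module.finBasis K V
  have hcontract : (Module.finrank K V - 1) * ∑ i, B (Y i) (Z i) = 0 := by
    calc (Module.finrank K V - 1) * ∑ i, B (Y i) (Z i)
        = ∑ j, ∑ i, yangMillsForm B (Y i) (Z i) (b j) (B.dualBasis hB b j) := by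
          rw [Finset.sum_comm, Finset.mul_sum]
          simp only [sum_yangMillsForm_dualBasis hsymm hB b]
      _ = 0 := by simp only [h, Finset.sum_const_zero]
  exact (mul_eq_zero.1 hcontract).resolve_left (sub_ne_zero.2 hdim)

theorem sum_tmul_eq_zero_of_sum_yangMillsForm_eq_zero (hsymm : B.IsSymm) (hB : B.Nondegenerate)
    (h3 : (3 : K) ≠ 0) (hdim : (Module.finrank K V : K) ≠ 1)
    (h : ∀ x x', ∑ i, yangMillsForm B (Y i) (Z i) x x' = 0) : ∑ i, Y i ⊗ₜ[K] Z i = 0 := by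
  let t (x x' : V) : K := ∑ i, B (Y i) x * B (Z i) x'
  have htrace := sum_apply_eq_zero_of_sum_yangMillsForm_eq_zero hsymm hB hdim h
  have hswap (x x' : V) : t x' x = 2 * t x x' := by
    have hexpand : ∑ i, yangMillsForm B (Y i) (Z i) x x'
        = (∑ i, B (Y i) (Z i)) * B x x' + t x' x - 2 * t x x' := by
      simp only [t, Finset.sum_mul, Finset.mul_sum, ← Finset.sum_add_distrib,
        ← Finset.sum_sub_distrib]
      refine Finset.sum_congr rfl fun i _ => ?_
      rw [yangMillsForm, hsymm.eq x' (Y i)]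
      ring
    rw [h, htrace] at hexpand
    linear_combination -hexpand
  refine sum_tmul_eq_zero_of_sum_apply_mul_apply_eq_zero hB hB fun x x' => ?_
  have htriple : 3 * t x x' = 0 := by linear_combination -2 * hswap x x' - hswap x' x
  exact (mul_eq_zero.1 htriple).resolve_left h3

theorem stmt_14_general (hsymm : B.IsSymm) (hB : B.Nondegenerate) (h3 : (3 : K) ≠ 0)
    (hdim : (Module.finrank K V : K) ≠ 1) :
    (∀ x₁ x₂ x₃ x₄, yangMillsForm B x₁ x₂ x₃ x₄ = yangMillsForm B x₄ x₁ x₂ x₃) ∧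
    (∀ x, (∀ x₁ x₂ x₃, yangMillsForm B x x₁ x₂ x₃ = 0) → x = 0) ∧
    (∀ {ι : Type*} [Fintype ι] (Y Z : ι → V),
      (∀ x₁ x₂, ∑ i, yangMillsForm B (Y i) (Z i) x₁ x₂ = 0) → ∑ i, Y i ⊗ₜ[K] Z i = 0) :=
  ⟨yangMillsForm_cyclic hsymm,
    fun _ => eq_zero_of_yangMillsForm_eq_zero hsymm hB hdim,
    fun _ _ => sum_tmul_eq_zero_of_sum_yangMillsForm_eq_zero hsymm hB h3 hdim⟩

end Nondegenerate

section Coordinates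

variable {K : Type*} [Field K] {n : ℕ} (G : Matrix (Fin n) (Fin n) K)

theorem gPair_eq_toBilin' (X Y : Fin n → K) : gPair G X Y = Matrix.toBilin' G X Y := by
  simp only [gPair, Matrix.toBilin'_apply, mul_comm (G _ _)]

theorem ymForm_eq_yangMillsForm (X₁ X₂ X₃ X₄ : Fin n → K) :
    ymForm G X₁ X₂ X₃ X₄ = yangMillsForm (Matrix.toBilin' G) X₁ X₂ X₃ X₄ := by
  simp only [ymForm, yangMillsForm, gPair_eq_toBilin']

theorem nondegenerate_toBilin'_of_isUnit {R κ : Type*} [CommRing R] [IsDomain R] [Fintype κ]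
    [DecidableEq κ] {A : Matrix κ κ R} (hA : IsUnit A) : (Matrix.toBilin' A).Nondegenerate :=
  LinearMap.BilinForm.nondegenerate_toBilin'_of_det_ne_zero' A
    ((Matrix.isUnit_iff_isUnit_det A).1 hA).ne_zero

end Coordinates

/-- over a field of characteristic zero, for `G` an invertible symmetric
`n×n` matrix (`n = m + 2 ≥ 2`), the Yang–Mills 4-linear form `w` satisfies: (1) it is
cyclic (`Q_w = id`); (2) condition (i): `w(X,·,·,·) = 0` identically implies `X = 0`;
(3) condition (iii′): `Σᵢ w(Yᵢ, Zᵢ, X₁, X₂) = 0` for all `X₁, X₂` implies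
`Σᵢ Yᵢ ⊗ Zᵢ = 0`. -/
theorem stmt_14 (K : Type*) [Field K] [CharZero K] (m : ℕ)
    (G : Matrix (Fin (m + 2)) (Fin (m + 2)) K) (hsym : Gᵀ = G) (hinv : IsUnit G) :
    (∀ X₁ X₂ X₃ X₄ : Fin (m + 2) → K,
      ymForm G X₁ X₂ X₃ X₄ = ymForm G X₄ X₁ X₂ X₃) ∧
    (∀ X : Fin (m + 2) → K,
      (∀ X₁ X₂ X₃ : Fin (m + 2) → K, ymForm G X X₁ X₂ X₃ = 0) → X = 0) ∧
    (∀ (k : ℕ) (Y Z : Fin k → (Fin (m + 2) → K)),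
      (∀ X₁ X₂ : Fin (m + 2) → K, ∑ i, ymForm G (Y i) (Z i) X₁ X₂ = 0) →
      ∑ i, (Y i) ⊗ₜ[K] (Z i) =
        (0 : TensorProduct K (Fin (m + 2) → K) (Fin (m + 2) → K))) := by
  have hdim : (Module.finrank K (Fin (m + 2) → K) : K) ≠ 1 := by
    rw [Module.finrank_fin_fun]
    exact_mod_cast (by omega : m + 2 ≠ 1)
  simp only [ymForm_eq_yangMillsForm]
  obtain ⟨hcyclic, hleft, hstrong⟩ := stmt_14_general (Matrix.isSymm_toBilin'_iff_isSymm.2 hsym)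
    (nondegenerate_toBilin'_of_isUnit hinv) three_ne_zero hdim
  exact ⟨hcyclic, hleft, fun _ => hstrong⟩
end

section
/- Let K be a field, m ≥ N ≥ 2 integers, and w a preregular m-linear form on K^g (g ≥ 2) with components W_{λ₁…λ_m} = w(e_{λ₁}, …, e_{λ_m}) and associated automorphism Q_w. Let R ⊆ (K^g)^{⊗N} be the linear span of the elements r_{λ₁…λ_{m−N}} = Σ_{μ₁,…,μ_N} W_{λ₁…λ_{m−N}μ₁…μ_N} e_{μ₁} ⊗ ⋯ ⊗ e_{μ_N}, for λ₁, …, λ_{m−N} ∈ {1,…,g}. Then the N-th tensor power (Q_wᵗ)^{⊗N} of the transpose Q_wᵗ of Q_w maps R into R; hence Q_wᵗ induces a degree-0 automorphism of the N-homogeneous algebra A(w, N) = A(E, R) with E = K^g. -/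
open Matrix
open scoped TensorProduct

section

variable (K : Type*) [Field K] (g p ν : ℕ)

/-- The transpose `Q_wᵗ` of an automorphism `Q` of `K^g`, with respect to the canonical
basis (i.e. the linear map whose matrix is the transpose of the matrix of `Q`). -/
noncomputable def transposeMap {K : Type*} [Field K] {g : ℕ}
    (Q : (Fin g → K) ≃ₗ[K] (Fin g → K)) : (Fin g → K) →ₗ[K] (Fin g → K) :=
  Matrix.toLin' (LinearMap.toMatrix' Q.toLinearMap)ᵀ

/-- The generators `r_{λ₁…λ_{m−N}} = Σ_{μ₁,…,μ_N} W_{λ₁…λ_{m−N}μ₁…μ_N} e_{μ₁} ⊗ ⋯ ⊗ e_{μ_N}`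
of the space of relations `R ⊆ (K^g)^{⊗N}` of `A(w, N)`, where `m = p + N`, `N = ν + 2`. -/
noncomputable def relVec
    (w : MultilinearMap K (fun _ : Fin (p + (ν + 2)) => (Fin g → K)) K)
    (lv : Fin p → Fin g) : PiTensorProduct K (fun _ : Fin (ν + 2) => Fin g → K) :=
  ∑ μ : Fin (ν + 2) → Fin g,
    w (Fin.append (fun i => Pi.single (lv i) 1) fun i => Pi.single (μ i) 1) •
      PiTensorProduct.tprod K (fun i => (Pi.single (μ i) 1 : Fin g → K))

/-- The space of relations `R` of the `N`-homogeneous algebra `A(w, N)`. -/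
noncomputable def relSpace
    (w : MultilinearMap K (fun _ : Fin (p + (ν + 2)) => (Fin g → K)) K) :
    Submodule K (PiTensorProduct K (fun _ : Fin (ν + 2) => Fin g → K)) :=
  Submodule.span K (Set.range (relVec K g p ν w))

/-- The defining relations of `A(w, N)` in the free algebra: for each multi-index
`λ₁…λ_{m−N}`, the element `Σ_{μ⃗} W_{λ⃗μ⃗} x^{μ₁}⋯x^{μ_N}` is set to `0`. -/
def relOf (w : MultilinearMap K (fun _ : Fin (p + (ν + 2)) => (Fin g → K)) K) :
    FreeAlgebra K (Fin g) → FreeAlgebra K (Fin g) → Prop := fun a b =>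
  b = 0 ∧ ∃ lv : Fin p → Fin g,
    a = ∑ μ : Fin (ν + 2) → Fin g,
      w (Fin.append (fun i => Pi.single (lv i) 1) fun i => Pi.single (μ i) 1) •
        (List.ofFn fun i => FreeAlgebra.ι K (μ i)).prod

/-!
Iterating the twisted cyclicity `m = p + N` times brings every argument back to its place with `Q_w`
applied to it, so `w` is invariant under `Q_w`. Transposing a tensor power moves it from the vectors
of `r_{λ₁…λ_{m−N}}` to the last `N` arguments of `w`; by invariance it can be traded there for
`Q_w⁻¹` on the first `m − N` arguments, and what is left is a linear combination of the relations.
The induced endomorphisms of `Q_wᵗ` and `(Q_w⁻¹)ᵗ` are inverse to each other.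
-/

section Cyclic

variable {E α : Type*} {n : ℕ}

theorem apply_window_succ {w : (Fin (n + 1) → E) → α} {Q : E → E}
    (hQ : ∀ x Y, w (Fin.snoc Y x) = w (Fin.cons (Q x) Y))
    {Z : ℕ → E} (hZ : ∀ k, Z (k + (n + 1)) = Q (Z k)) (k : ℕ) :
    w (fun i ↦ Z (k + 1 + i.rev)) = w (fun i ↦ Z (k + i.rev)) := by
  have hsnoc : (fun i : Fin (n + 1) ↦ Z (k + i.rev)) =
      Fin.snoc (fun j : Fin n ↦ Z (k + 1 + j.rev)) (Z k) := by
    funext i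
    cases i using Fin.lastCases with
    | last => simp
    | cast j => simp [Fin.rev_castSucc, add_assoc, add_comm 1]
  have hcons : (fun i : Fin (n + 1) ↦ Z (k + 1 + i.rev)) =
      Fin.cons (Q (Z k)) (fun j : Fin n ↦ Z (k + 1 + j.rev)) := by
    funext i
    cases i using Fin.cases with
    | zero => simp [← hZ, add_assoc, add_comm 1]
    | succ j => simp [Fin.rev_succ]
  rw [hsnoc, hcons, hQ]

theorem apply_comp_eq_of_apply_snoc_eq {w : (Fin (n + 1) → E) → α} {Q : E → E}
    (hQ : ∀ x Y, w (Fin.snoc Y x) = w (Fin.cons (Q x) Y)) (X : Fin (n + 1) → E) :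
    w (fun i ↦ Q (X i)) = w X := by
  -- The cyclic rotations of `X` are the windows of this quasi-periodic sequence.
  let Z : ℕ → E := fun k ↦ Q^[k / (n + 1)] (X (Fin.ofNat (n + 1) k).rev)
  have hZ (k : ℕ) : Z (k + (n + 1)) = Q (Z k) := by
    simp [Z, Fin.ofNat, Function.iterate_succ_apply']
  have hZX (i : Fin (n + 1)) : Z i.rev = X i := by
    simp only [Z, Nat.div_eq_of_lt i.rev.isLt, Function.iterate_zero, id, Fin.ofNat_val_eq_self,
      Fin.rev_rev]
  have hwindow (k : ℕ) : w (fun i ↦ Z (k + i.rev)) = w (fun i ↦ Z i.rev) := by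
    induction k with
    | zero => simp only [zero_add]
    | succ k ih => rw [apply_window_succ hQ hZ, ih]
  simpa only [add_comm (n + 1), hZ, hZX] using hwindow (n + 1)

end Cyclic

theorem apply_symm_comp_eq {κ E α : Type*} {w : (κ → E) → α} {Q : E ≃ E}
    (hw : ∀ X, w (fun i ↦ Q (X i)) = w X) (X : κ → E) : w (fun i ↦ Q.symm (X i)) = w X := by
  simp [← hw fun i ↦ Q.symm (X i)]

section Multilinear

variable {R ι κ M : Type*} [CommSemiring R] [Fintype ι] [DecidableEq ι] [Fintype κ]
  [DecidableEq κ] [AddCommMonoid M] [Module R M]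

theorem multilinearMap_apply_eq_sum_single (f : MultilinearMap R (fun _ : κ ↦ ι → R) M)
    (v : κ → ι → R) :
    f v = ∑ r : κ → ι, (∏ k, v k (r k)) • f (fun k ↦ Pi.single (r k) 1) :=
  calc f v = f (fun k ↦ ∑ i, v k i • Pi.single i 1) :=
        congrArg f (funext fun k ↦ pi_eq_sum_univ' (v k))
    _ = ∑ r : κ → ι, f (fun k ↦ v k (r k) • Pi.single (r k) 1) := f.map_sum _
    _ = _ := Finset.sum_congr rfl fun _ _ ↦ f.map_smul_univ _ _

/-- The full contraction `∑ u(e_{μ₁}, …, e_{μ_N}) • F(e_{μ₁}, …, e_{μ_N})` of two multilinear maps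
along the canonical basis, as a linear map in the form `u`. With `F` the canonical map to the tensor
power and `u = w(e_{λ₁}, …, e_{λ_p}, -)`, it is the relation `r_{λ₁…λ_p}`. -/
def contract (F : MultilinearMap R (fun _ : κ ↦ ι → R) M) :
    MultilinearMap R (fun _ : κ ↦ ι → R) R →ₗ[R] M where
  toFun u := ∑ μ : κ → ι, u (fun k ↦ Pi.single (μ k) 1) • F (fun k ↦ Pi.single (μ k) 1)
  map_add' u v := by simp only [_root_.add_apply, add_smul, Finset.sum_add_distrib]
  map_smul' c u := by
    simp only [_root_.smul_apply, smul_assoc, Finset.smul_sum, RingHom.id_apply]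

theorem contract_apply (F : MultilinearMap R (fun _ : κ ↦ ι → R) M)
    (u : MultilinearMap R (fun _ : κ ↦ ι → R) R) :
    contract F u =
      ∑ μ : κ → ι, u (fun k ↦ Pi.single (μ k) 1) • F (fun k ↦ Pi.single (μ k) 1) :=
  rfl

theorem map_contract {M' : Type*} [AddCommMonoid M'] [Module R M'] (f : M →ₗ[R] M')
    (F : MultilinearMap R (fun _ : κ ↦ ι → R) M) (u : MultilinearMap R (fun _ : κ ↦ ι → R) R) :
    f (contract F u) = contract (f.compMultilinearMap F) u := by
  simp only [contract_apply, map_sum, map_smul, LinearMap.compMultilinearMap_apply]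

theorem contract_compLinearMap_transpose (A : Matrix ι ι R)
    (F : MultilinearMap R (fun _ : κ ↦ ι → R) M) (u : MultilinearMap R (fun _ : κ ↦ ι → R) R) :
    contract (F.compLinearMap fun _ ↦ Aᵀ.toLin') u =
      contract F (u.compLinearMap fun _ ↦ A.toLin') := by
  have hF (μ : κ → ι) : F (fun k ↦ Aᵀ.toLin' (Pi.single (μ k) 1)) =
      ∑ r : κ → ι, (∏ k, A (μ k) (r k)) • F (fun k ↦ Pi.single (r k) 1) := by
    rw [multilinearMap_apply_eq_sum_single]
    simp
  have hu (r : κ → ι) : u (fun k ↦ A.toLin' (Pi.single (r k) 1)) =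
      ∑ μ : κ → ι, (∏ k, A (μ k) (r k)) * u (fun k ↦ Pi.single (μ k) 1) := by
    rw [multilinearMap_apply_eq_sum_single]
    simp
  simp only [contract_apply, MultilinearMap.compLinearMap_apply, hF, hu, Finset.smul_sum,
    Finset.sum_smul, smul_smul]
  rw [Finset.sum_comm]
  simp only [mul_comm]

end Multilinear

theorem multilinearMap_apply_mem_of_single_mem {R ι κ M : Type*} [CommSemiring R] [Finite ι]
    [DecidableEq ι] [Finite κ] [AddCommMonoid M] [Module R M]
    (f : MultilinearMap R (fun _ : κ ↦ ι → R) M) {S : Submodule R M}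
    (hS : ∀ r : κ → ι, f (fun k ↦ Pi.single (r k) 1) ∈ S) (v : κ → ι → R) : f v ∈ S := by
  classical
  cases nonempty_fintype ι
  cases nonempty_fintype κ
  rw [multilinearMap_apply_eq_sum_single]
  exact S.sum_mem fun r _ ↦ S.smul_mem _ (hS r)

section Curry

variable {R E M : Type*} [CommSemiring R] [AddCommMonoid E] [Module R E] [AddCommMonoid M]
  [Module R M] {p N : ℕ}

/-- A multilinear map of `p + N` variables, viewed as a multilinear map of the first `p` with values
in the multilinear maps of the last `N`. -/
def curryAppend (w : MultilinearMap R (fun _ : Fin (p + N) ↦ E) M) :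
    MultilinearMap R (fun _ : Fin p ↦ E) (MultilinearMap R (fun _ : Fin N ↦ E) M) :=
  (w.domDomCongr finSumFinEquiv.symm).currySum

theorem curryAppend_apply (w : MultilinearMap R (fun _ : Fin (p + N) ↦ E) M)
    (x : Fin p → E) (y : Fin N → E) : curryAppend w x y = w (Fin.append x y) := by
  simp only [curryAppend, MultilinearMap.currySum_apply, MultilinearMap.domDomCongr_apply]
  congr 1
  funext i
  cases i using Fin.addCases <;> simp

theorem curryAppend_compLinearMap {w : MultilinearMap R (fun _ : Fin (p + N) ↦ E) M}
    {Q : E ≃ₗ[R] E} (hw : ∀ X, w (fun i ↦ Q (X i)) = w X) (x : Fin p → E) :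
    (curryAppend w x).compLinearMap (fun _ ↦ Q.toLinearMap) =
      curryAppend w (fun i ↦ Q.symm (x i)) := by
  ext y
  rw [MultilinearMap.compLinearMap_apply, curryAppend_apply, curryAppend_apply,
    ← hw (Fin.append (fun i ↦ Q.symm (x i)) y)]
  congr 1
  funext i
  cases i using Fin.addCases <;> simp

end Curry

section Transpose

variable {K : Type*} [Field K] {g : ℕ}

theorem transposeMap_transposeMap_symm (Q : (Fin g → K) ≃ₗ[K] (Fin g → K)) (x : Fin g → K) :
    transposeMap Q (transposeMap Q.symm x) = x := by
  simp only [transposeMap, ← Matrix.toLin'_mul_apply, ← Matrix.transpose_mul,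
    ← LinearMap.toMatrix'_comp]
  simp

theorem contract_compLinearMap_transposeMap_mem {M : Type*} [AddCommMonoid M] [Module K M]
    {p N : ℕ} {w : MultilinearMap K (fun _ : Fin (p + N) ↦ Fin g → K) K}
    {Q : (Fin g → K) ≃ₗ[K] (Fin g → K)} (hw : ∀ X, w (fun i ↦ Q (X i)) = w X)
    {F : MultilinearMap K (fun _ : Fin N ↦ Fin g → K) M} {S : Submodule K M}
    (hS : ∀ lv : Fin p → Fin g, contract F (curryAppend w fun i ↦ Pi.single (lv i) 1) ∈ S)
    (x : Fin p → Fin g → K) :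
    contract (F.compLinearMap fun _ ↦ transposeMap Q) (curryAppend w x) ∈ S := by
  have htranspose : contract (F.compLinearMap fun _ ↦ transposeMap Q) (curryAppend w x) =
      contract F (curryAppend w fun i ↦ Q.symm (x i)) := by
    simp only [transposeMap, contract_compLinearMap_transpose, Matrix.toLin'_toMatrix',
      curryAppend_compLinearMap hw]
  rw [htranspose]
  exact multilinearMap_apply_mem_of_single_mem
    ((contract F).compMultilinearMap (curryAppend w)) hS _

end Transpose

section HomogeneousAlgebra

variable {K : Type*} [Field K] {g p ν : ℕ}
  {w : MultilinearMap K (fun _ : Fin (p + (ν + 2)) ↦ Fin g → K) K}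
  {B : Type*} [Semiring B] [Algebra K B]

theorem relVec_eq_contract (lv : Fin p → Fin g) :
    relVec K g p ν w lv =
      contract (PiTensorProduct.tprod K) (curryAppend w fun i ↦ Pi.single (lv i) 1) := by
  simp only [relVec, contract_apply, curryAppend_apply]

theorem map_transposeMap_relSpace_le {Q : (Fin g → K) ≃ₗ[K] (Fin g → K)}
    (hw : ∀ X, w (fun i ↦ Q (X i)) = w X) :
    (relSpace K g p ν w).map (PiTensorProduct.map fun _ ↦ transposeMap Q) ≤
      relSpace K g p ν w := by
  have hrel (lv : Fin p → Fin g) : contract (PiTensorProduct.tprod K)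
      (curryAppend w fun i ↦ Pi.single (lv i) 1) ∈ relSpace K g p ν w :=
    relVec_eq_contract (w := w) lv ▸ Submodule.subset_span ⟨lv, rfl⟩
  have htprod : (PiTensorProduct.map fun _ : Fin (ν + 2) ↦ transposeMap Q).compMultilinearMap
      (PiTensorProduct.tprod K) =
        (PiTensorProduct.tprod K).compLinearMap fun _ ↦ transposeMap Q := by
    ext x
    simp
  rw [relSpace, Submodule.map_span_le]
  rintro _ ⟨lv, rfl⟩
  rw [relVec_eq_contract, map_contract, htprod]
  exact contract_compLinearMap_transposeMap_mem hw hrel _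

/-- The multilinear map `(x₁, …, x_N) ↦ L x₁ ⋯ L x_N` into an algebra. -/
def mulOfLinear (N : ℕ) (L : (Fin g → K) →ₗ[K] B) :
    MultilinearMap K (fun _ : Fin N ↦ Fin g → K) B :=
  (MultilinearMap.mkPiAlgebraFin K N B).compLinearMap fun _ ↦ L

/-- The linear map `L` from the degree-one part `E = K^g` to an algebra sends the defining relations
of `A(w, N)` to zero. -/
def RespectsRelations (w : MultilinearMap K (fun _ : Fin (p + (ν + 2)) ↦ Fin g → K) K)
    (L : (Fin g → K) →ₗ[K] B) : Prop :=
  ∀ lv : Fin p → Fin g,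
    contract (mulOfLinear (ν + 2) L) (curryAppend w fun i ↦ Pi.single (lv i) 1) = 0

theorem lift_relation (L : (Fin g → K) →ₗ[K] B) (lv : Fin p → Fin g) :
    FreeAlgebra.lift K (fun l ↦ L (Pi.single l 1))
        (∑ μ : Fin (ν + 2) → Fin g,
          w (Fin.append (fun i ↦ Pi.single (lv i) 1) fun i ↦ Pi.single (μ i) 1) •
            (List.ofFn fun i ↦ FreeAlgebra.ι K (μ i)).prod) =
      contract (mulOfLinear (ν + 2) L) (curryAppend w fun i ↦ Pi.single (lv i) 1) := by
  simp only [map_sum, map_smul, map_list_prod, List.map_ofFn, contract_apply, curryAppend_apply,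
    mulOfLinear, MultilinearMap.compLinearMap_apply, MultilinearMap.mkPiAlgebraFin_apply,
    Function.comp_def, FreeAlgebra.lift_ι_apply]

theorem RespectsRelations.comp_transposeMap {L : (Fin g → K) →ₗ[K] B}
    (hL : RespectsRelations w L) {Q : (Fin g → K) ≃ₗ[K] (Fin g → K)}
    (hw : ∀ X, w (fun i ↦ Q (X i)) = w X) :
    RespectsRelations w (L ∘ₗ transposeMap Q) := fun lv ↦
  (Submodule.mem_bot K).1 <|
    contract_compLinearMap_transposeMap_mem (F := mulOfLinear (ν + 2) L) hw
      (fun lv ↦ (Submodule.mem_bot K).2 (hL lv)) fun i ↦ Pi.single (lv i) 1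

/-- The inclusion of the degree-one part `E = K^g` into `A(w, N)`. -/
noncomputable def degreeOne (w : MultilinearMap K (fun _ : Fin (p + (ν + 2)) ↦ Fin g → K) K) :
    (Fin g → K) →ₗ[K] RingQuot (relOf K g p ν w) :=
  Fintype.linearCombination K fun l ↦
    RingQuot.mkAlgHom K (relOf K g p ν w) (FreeAlgebra.ι K l)

theorem degreeOne_single (l : Fin g) :
    degreeOne w (Pi.single l 1) =
      RingQuot.mkAlgHom K (relOf K g p ν w) (FreeAlgebra.ι K l) := by
  simp [degreeOne]

theorem respectsRelations_degreeOne : RespectsRelations w (degreeOne w) := by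
  intro lv
  have hmk : FreeAlgebra.lift K (fun l ↦ degreeOne w (Pi.single l 1)) =
      RingQuot.mkAlgHom K (relOf K g p ν w) :=
    FreeAlgebra.hom_ext <| funext fun l ↦ by simp [degreeOne_single]
  rw [← lift_relation, hmk, RingQuot.mkAlgHom_rel K ⟨rfl, lv, rfl⟩, map_zero]

/-- The extension of `L` to an algebra map `A(w, N) → B`: the universal property of `A(w, N)`. -/
noncomputable def RespectsRelations.liftAlgHom {L : (Fin g → K) →ₗ[K] B}
    (hL : RespectsRelations w L) : RingQuot (relOf K g p ν w) →ₐ[K] B :=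
  RingQuot.liftAlgHom K ⟨FreeAlgebra.lift K fun l ↦ L (Pi.single l 1), by
    rintro _ _ ⟨rfl, lv, rfl⟩
    rw [lift_relation, hL lv, map_zero]⟩

theorem RespectsRelations.liftAlgHom_degreeOne {L : (Fin g → K) →ₗ[K] B}
    (hL : RespectsRelations w L) (x : Fin g → K) : hL.liftAlgHom (degreeOne w x) = L x := by
  suffices hL.liftAlgHom.toLinearMap ∘ₗ degreeOne w = L from LinearMap.congr_fun this x
  ext l
  simp [degreeOne_single, liftAlgHom]

theorem algHom_ext_degreeOne {φ ψ : RingQuot (relOf K g p ν w) →ₐ[K] B}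
    (h : ∀ x, φ (degreeOne w x) = ψ (degreeOne w x)) : φ = ψ :=
  RingQuot.ringQuot_ext' K _ _ <| FreeAlgebra.hom_ext <| funext fun l ↦ by
    simpa [degreeOne_single] using h (Pi.single l 1)

/-- The endomorphism of `A(w, N)` induced by `Qᵗ`, for `Q` preserving `w`. -/
noncomputable def transposeAlgHom {Q : (Fin g → K) ≃ₗ[K] (Fin g → K)}
    (hw : ∀ X, w (fun i ↦ Q (X i)) = w X) :
    RingQuot (relOf K g p ν w) →ₐ[K] RingQuot (relOf K g p ν w) :=
  (respectsRelations_degreeOne.comp_transposeMap hw).liftAlgHom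

theorem transposeAlgHom_degreeOne {Q : (Fin g → K) ≃ₗ[K] (Fin g → K)}
    (hw : ∀ X, w (fun i ↦ Q (X i)) = w X) (x : Fin g → K) :
    transposeAlgHom hw (degreeOne w x) = degreeOne w (transposeMap Q x) :=
  RespectsRelations.liftAlgHom_degreeOne _ x

/-- The automorphism of `A(w, N)` induced by `Qᵗ`, with inverse induced by `(Q⁻¹)ᵗ`. -/
noncomputable def transposeAlgEquiv {Q : (Fin g → K) ≃ₗ[K] (Fin g → K)}
    (hw : ∀ X, w (fun i ↦ Q (X i)) = w X) :
    RingQuot (relOf K g p ν w) ≃ₐ[K] RingQuot (relOf K g p ν w) :=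
  AlgEquiv.ofAlgHom (transposeAlgHom hw) (transposeAlgHom (Q := Q.symm)
      (apply_symm_comp_eq (w := w) (Q := Q.toEquiv) hw))
    (algHom_ext_degreeOne fun x ↦ by
      simp [transposeAlgHom_degreeOne, transposeMap_transposeMap_symm])
    (algHom_ext_degreeOne fun x ↦ by
      simpa [transposeAlgHom_degreeOne] using
        congrArg (degreeOne w) (transposeMap_transposeMap_symm Q.symm x))

theorem transposeAlgEquiv_degreeOne {Q : (Fin g → K) ≃ₗ[K] (Fin g → K)}
    (hw : ∀ X, w (fun i ↦ Q (X i)) = w X) (x : Fin g → K) :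
    transposeAlgEquiv hw (degreeOne w x) = degreeOne w (transposeMap Q x) :=
  transposeAlgHom_degreeOne hw x

end HomogeneousAlgebra

theorem stmt_19_general
    (w : MultilinearMap K (fun _ : Fin (p + (ν + 2)) => (Fin g → K)) K)
    (Q : (Fin g → K) ≃ₗ[K] (Fin g → K))
    (hw : ∀ X : Fin (p + (ν + 2)) → (Fin g → K), w (fun i => Q (X i)) = w X) :
    Submodule.map (PiTensorProduct.map fun _ : Fin (ν + 2) => transposeMap Q)
        (relSpace K g p ν w) ≤ relSpace K g p ν w ∧
    ∃ φ : RingQuot (relOf K g p ν w) ≃ₐ[K] RingQuot (relOf K g p ν w),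
      ∀ l : Fin g,
        φ (RingQuot.mkAlgHom K (relOf K g p ν w) (FreeAlgebra.ι K l)) =
          ∑ μ : Fin g, (transposeMap Q (Pi.single l 1) μ) •
            RingQuot.mkAlgHom K (relOf K g p ν w) (FreeAlgebra.ι K μ) := by
  refine ⟨map_transposeMap_relSpace_le hw, transposeAlgEquiv hw, fun l ↦ ?_⟩
  rw [← degreeOne_single, transposeAlgEquiv_degreeOne, degreeOne,
    Fintype.linearCombination_apply]

/-- for a preregular `m`-linear form `w` on `K^g` (`m = p + N ≥ N = ν + 2`)
with associated automorphism `Q_w = Q`, the `N`-th tensor power of the transpose `Q_wᵗ`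
maps the space of relations `R` of `A(w, N)` into itself; hence `Q_wᵗ` induces a degree-0
automorphism of the `N`-homogeneous algebra `A(w, N)`. -/
theorem stmt_19 (hg : 2 ≤ g)
    (w : MultilinearMap K (fun _ : Fin (p + (ν + 2)) => (Fin g → K)) K)
    (Q : (Fin g → K) ≃ₗ[K] (Fin g → K))
    (hi : ∀ x : Fin g → K,
      (∀ Y : Fin (p + (ν + 1)) → (Fin g → K), w (Fin.cons x Y) = 0) → x = 0)
    (hQ : ∀ (x : Fin g → K) (Y : Fin (p + (ν + 1)) → (Fin g → K)),
      w (Fin.snoc Y x) = w (Fin.cons (Q x) Y)) :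
    Submodule.map (PiTensorProduct.map fun _ : Fin (ν + 2) => transposeMap Q)
        (relSpace K g p ν w) ≤ relSpace K g p ν w ∧
    ∃ φ : RingQuot (relOf K g p ν w) ≃ₐ[K] RingQuot (relOf K g p ν w),
      ∀ l : Fin g,
        φ (RingQuot.mkAlgHom K (relOf K g p ν w) (FreeAlgebra.ι K l)) =
          ∑ μ : Fin g, (transposeMap Q (Pi.single l 1) μ) •
            RingQuot.mkAlgHom K (relOf K g p ν w) (FreeAlgebra.ι K μ) := by
  exact stmt_19_general K g p ν w Q (apply_comp_eq_of_apply_snoc_eq (n := p + (ν + 1)) hQ)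

end
end
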